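/- arXiv:1402.2936 — 2 statements merged into one kernel-verified Lean document; each statement's English description precedes it below -/
import Mathlib

section
/- Let A ∈ ℂ^{M×d} and Ψ = diag(e^{iφ_1},…,e^{iφ_d}) with all φ_i real. Then the augmented steering matrix A^{nc} = [A ; Π_M·conj(A)·conj(Ψ)·conj(Ψ)] ∈ ℂ^{2M×d} is always centro-symmetric, i.e., Π_{2M}·conj(A^{nc}) = A^{nc}·Ψ·Ψ, where Ψ·Ψ is a unitary diagonal matrix; this holds even if A itself satisfies no centro-symmetry relation. -/
open Matrix Complex

/-- The `n × n` exchange matrix with ones on the antidiagonal and zeros elsewhere. -/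
def exchg (R : Type*) [Zero R] [One R] (n : ℕ) : Matrix (Fin n) (Fin n) R :=
  Matrix.of fun i j => if (i : ℕ) + (j : ℕ) = n - 1 then (1 : R) else 0

/-!
Since `conj(Π) = Π` and `Π * Π = 1`, the matrix `Π_{2M} conj(A^{nc})` has blocks `A * U` and
`Π conj(A)`, where `U = Ψ * Ψ`. These are the blocks of `A^{nc} * U` as soon as `conj(U) * U = 1`,
and for a diagonal, hence symmetric, `U` this says that `U` is unitary.
-/

section ExchangeMatrix

variable {R : Type*} (n : ℕ)

theorem exchg_eq_permMatrix_revPerm [Zero R] [One R] :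
    exchg R n = (Fin.revPerm : Equiv.Perm (Fin n)).permMatrix R := by
  ext i j
  have rev_eq_iff : i.rev = j ↔ (i : ℕ) + j = n - 1 := by
    rw [Fin.ext_iff, Fin.val_rev]
    omega
  simp [exchg, Equiv.Perm.permMatrix, PEquiv.toMatrix_apply, rev_eq_iff]

theorem exchg_mul_self [NonAssocSemiring R] : exchg R n * exchg R n = 1 := by
  have revPerm_mul_self : (Fin.revPerm : Equiv.Perm (Fin n)) * Fin.revPerm = 1 :=
    Equiv.ext Fin.rev_rev
  rw [exchg_eq_permMatrix_revPerm, ← permMatrix_mul, revPerm_mul_self, permMatrix_one]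

theorem map_exchg {S : Type*} [NonAssocSemiring R] [NonAssocSemiring S] (f : R →+* S) :
    (exchg R n).map f = exchg S n := by
  rw [exchg_eq_permMatrix_revPerm, exchg_eq_permMatrix_revPerm, Equiv.Perm.permMatrix,
    PEquiv.map_toMatrix]

theorem exchg_mul_map_exchg [NonAssocSemiring R] (f : R →+* R) :
    exchg R n * (exchg R n).map f = 1 := by
  rw [map_exchg, exchg_mul_self]

end ExchangeMatrix

theorem diagonal_mem_unitary {R n : Type*} [Semiring R] [StarRing R] [Fintype n] [DecidableEq n]
    {ψ : n → R} (hψ : ∀ i, ψ i ∈ unitary R) : diagonal ψ ∈ unitary (Matrix n n R) := by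
  simp [Unitary.mem_iff, star_eq_conjTranspose, diagonal_conjTranspose, diagonal_mul_diagonal,
    fun i => Unitary.star_mul_self_of_mem (hψ i), fun i => Unitary.mul_star_self_of_mem (hψ i)]

section Conjugation

variable {R m n : Type*} [CommSemiring R] [StarRing R]

theorem map_starRingEnd_map_starRingEnd (A : Matrix m n R) :
    (A.map (starRingEnd R)).map (starRingEnd R) = A := by
  ext i j
  exact starRingEnd_self_apply (A i j)

theorem map_starRingEnd_eq_conjTranspose {U : Matrix n n R} (hU : U.IsSymm) :
    U.map (starRingEnd R) = Uᴴ :=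
  congrArg (·.map (starRingEnd R)) hU.eq.symm

theorem fromBlocks_mul_map_starRingEnd_fromRows [Fintype m] [DecidableEq m] [Fintype n]
    [DecidableEq n] {J : Matrix m m R} {U : Matrix n n R} (A : Matrix m n R)
    (hJ : J * J.map (starRingEnd R) = 1) (hU : U.map (starRingEnd R) * U = 1) :
    fromBlocks 0 J J 0 *
        (fromRows A (J * A.map (starRingEnd R) * U.map (starRingEnd R))).map (starRingEnd R) =
      fromRows A (J * A.map (starRingEnd R) * U.map (starRingEnd R)) * U := by
  have upper : J * (J * A.map (starRingEnd R) * U.map (starRingEnd R)).map (starRingEnd R) =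
      A * U := by
    rw [Matrix.map_mul, Matrix.map_mul, map_starRingEnd_map_starRingEnd,
      map_starRingEnd_map_starRingEnd, ← Matrix.mul_assoc, ← Matrix.mul_assoc, hJ, Matrix.one_mul]
  have lower : J * A.map (starRingEnd R) * U.map (starRingEnd R) * U =
      J * A.map (starRingEnd R) := by
    rw [Matrix.mul_assoc, hU, Matrix.mul_one]
  rw [fromRows_map, fromBlocks_mul_fromRows, fromRows_mul, upper, lower]
  simp only [Matrix.zero_mul, zero_add, add_zero]

theorem augmented_steering_centro_symmetric_general [Fintype m] [DecidableEq m] [Fintype n]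
    [DecidableEq n] {J : Matrix m m R} (hJ : J * J.map (starRingEnd R) = 1) (A : Matrix m n R)
    {ψ : n → R} (hψ : ∀ i, ψ i ∈ unitary R) {Ψ : Matrix n n R} (hΨ : Ψ = diagonal ψ)
    {Anc : Matrix (m ⊕ m) n R}
    (hAnc : Anc = fromRows A
      (J * A.map (starRingEnd R) * Ψ.map (starRingEnd R) * Ψ.map (starRingEnd R))) :
    fromBlocks 0 J J 0 * Anc.map (starRingEnd R) = Anc * Ψ * Ψ ∧
      (Ψ * Ψ)ᴴ * (Ψ * Ψ) = 1 ∧ (Ψ * Ψ).IsDiag := by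
  have isDiag_sq : (Ψ * Ψ).IsDiag := by
    rw [hΨ, diagonal_mul_diagonal]
    exact isDiag_diagonal _
  have unitary_sq : (Ψ * Ψ)ᴴ * (Ψ * Ψ) = 1 := by
    have hmem : Ψ ∈ unitary (Matrix n n R) := hΨ ▸ diagonal_mem_unitary hψ
    exact Unitary.star_mul_self_of_mem (mul_mem hmem hmem)
  have conj_mul_sq : (Ψ * Ψ).map (starRingEnd R) * (Ψ * Ψ) = 1 := by
    rw [map_starRingEnd_eq_conjTranspose isDiag_sq.isSymm, unitary_sq]
  refine ⟨?_, unitary_sq, isDiag_sq⟩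
  rw [Matrix.mul_assoc _ (Ψ.map _), ← Matrix.map_mul] at hAnc
  rw [Matrix.mul_assoc Anc, hAnc, fromBlocks_mul_map_starRingEnd_fromRows A hJ conj_mul_sq]

end Conjugation

theorem exp_I_mul_ofReal_mem_unitary (t : ℝ) : exp (I * t) ∈ unitary ℂ := by
  rw [Unitary.mem_iff_star_mul_self, ← starRingEnd_apply, conj_mul', norm_exp_I_mul_ofReal]
  simp

/-- the augmented steering matrix
`A^{nc} = [A ; Π_M conj(A) conj(Ψ) conj(Ψ)]` is always centro-symmetric:
`Π_{2M} conj(A^{nc}) = A^{nc} Ψ Ψ`, where `Ψ Ψ` is a unitary diagonal matrix —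
even if `A` itself satisfies no centro-symmetry relation.
(Here `Π_{2M}` is represented on the index type `Fin M ⊕ Fin M` as the block matrix
`[[0, Π_M],[Π_M, 0]]`.) -/
theorem augmented_steering_centro_symmetric
    (M d : ℕ) (A : Matrix (Fin M) (Fin d) ℂ) (φ : Fin d → ℝ)
    (Ψ : Matrix (Fin d) (Fin d) ℂ)
    (hΨ : Ψ = Matrix.diagonal fun i => Complex.exp (Complex.I * (φ i : ℂ)))
    (Anc : Matrix (Fin M ⊕ Fin M) (Fin d) ℂ)
    (hAnc : Anc = Matrix.fromRows A
      (exchg ℂ M * A.map (starRingEnd ℂ) * Ψ.map (starRingEnd ℂ) * Ψ.map (starRingEnd ℂ))) :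
    (Matrix.fromBlocks 0 (exchg ℂ M) (exchg ℂ M) 0) * Anc.map (starRingEnd ℂ)
      = Anc * Ψ * Ψ ∧ (Ψ * Ψ)ᴴ * (Ψ * Ψ) = 1 ∧ (Ψ * Ψ).IsDiag :=
  augmented_steering_centro_symmetric_general (exchg_mul_map_exchg M (starRingEnd ℂ)) A
    (fun i => exp_I_mul_ofReal_mem_unitary (φ i)) hΨ hAnc
end

section
/- Let M ≥ 2 and N ≥ 1 be integers, μ, φ real, σ > 0 real, and let s_0 ∈ ℝ^N be a nonzero real vector with empirical power P = ‖s_0‖²/N. Let v ∈ ℂ^{2M} be the vector defined from M, μ, φ via the single-source ESPRIT error computation (i.e., v^T = (√(2M)/(2(M−1)))·(a^{nc})^H·(J_1^{nc})^T·(e^{−iμ}·J_2^{nc} − J_1^{nc})·P⊥ with a^{nc} = [a ; e^{−2iφ}·Π_M·conj(a)], a_k = e^{ikμ}, maximum-overlap selection matrices J_1 = [I_{M−1} | 0], J_2 = [0 | I_{M−1}], J_1^{nc} = blkdiag(J_1, Π_{M−1}·J_2·Π_M), J_2^{nc} = blkdiag(J_2, Π_{M−1}·J_1·Π_M), and P⊥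 = I_{2M} − (1/(2M))·a^{nc}·(a^{nc})^H), and let s̃ = conj(e^{iφ}·s_0)/(√(2M·N·P)·√(N·P)) ∈ ℂ^N. Then the mean squared error of 1-D NC Standard ESPRIT for a single strictly non-circular source in circularly symmetric white noise of variance σ², given by (σ²/2)·(‖s̃‖²·‖v‖² − Re{(s̃^T·s̃)·(v^T·Π_{2M}·v)}), equals (σ²/(N·P))·1/(M−1)², i.e., the reciprocal effective SNR times M/(M·(M−1)²). -/
/-!
The steering vector is shift invariant, `J₂^{nc} a^{nc} = e^{iμ} J₁^{nc} a^{nc}`. Hence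
`e^{−iμ} J₂^{nc} − J₁^{nc}` annihilates `a^{nc}`, so `P⊥` acts trivially in `v`, and `vᵀ` is a
multiple of `(a^{nc})ᴴ ((J₂^{nc})ᵀ J₂^{nc} − (J₁^{nc})ᵀ J₁^{nc})`. The difference of Gram matrices
is diagonal and nonzero only at the ends of the two subarrays, where it is `±1`; this gives `‖v‖²`.
Reversing the augmented array conjugates `a^{nc}` up to the phase `e^{−2iφ}` and flips these signs,
so `vᵀ Π_{2M} v = −e^{2iφ} ‖v‖²`. As `s̃ᵀ s̃ = e^{−2iφ} ‖s̃‖²`, the two terms of the error are equal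
and it is `σ² ‖s̃‖² ‖v‖²`.
-/

open Matrix Complex

/-- The ULA steering vector `a ∈ ℂ^M` with entries `a_k = e^{i k μ}`, as a column. -/
noncomputable def avec (M : ℕ) (μ : ℝ) : Matrix (Fin M) (Fin 1) ℂ :=
  Matrix.of fun k _ => Complex.exp (Complex.I * ((k : ℕ) : ℂ) * (μ : ℂ))

/-- The augmented steering vector `a^{nc} = [a ; e^{−2iφ} Π_M conj(a)] ∈ ℂ^{2M}`. -/
noncomputable def ancvec (M : ℕ) (μ φ : ℝ) : Matrix (Fin M ⊕ Fin M) (Fin 1) ℂ :=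
  Matrix.fromRows (avec M μ)
    (Complex.exp (-(2 * (φ : ℂ) * Complex.I)) • (exchg ℂ M * (avec M μ).map (starRingEnd ℂ)))

/-- The maximum-overlap selection matrix `J₁ = [I_{M−1} | 0]`. -/
def Jsel1 (M : ℕ) : Matrix (Fin (M - 1)) (Fin M) ℂ :=
  Matrix.of fun i j => if (j : ℕ) = (i : ℕ) then 1 else 0

/-- The maximum-overlap selection matrix `J₂ = [0 | I_{M−1}]`. -/
def Jsel2 (M : ℕ) : Matrix (Fin (M - 1)) (Fin M) ℂ :=
  Matrix.of fun i j => if (j : ℕ) = (i : ℕ) + 1 then 1 else 0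

/-- The augmented selection matrix `J₁^{nc} = blkdiag(J₁, Π_{M−1} J₂ Π_M)`. -/
noncomputable def J1nc (M : ℕ) : Matrix (Fin (M - 1) ⊕ Fin (M - 1)) (Fin M ⊕ Fin M) ℂ :=
  Matrix.fromBlocks (Jsel1 M) 0 0 (exchg ℂ (M - 1) * Jsel2 M * exchg ℂ M)

/-- The augmented selection matrix `J₂^{nc} = blkdiag(J₂, Π_{M−1} J₁ Π_M)`. -/
noncomputable def J2nc (M : ℕ) : Matrix (Fin (M - 1) ⊕ Fin (M - 1)) (Fin M ⊕ Fin M) ℂ :=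
  Matrix.fromBlocks (Jsel2 M) 0 0 (exchg ℂ (M - 1) * Jsel1 M * exchg ℂ M)

/-- The orthogonal projection `P⊥ = I_{2M} − (1/(2M)) a^{nc} (a^{nc})ᴴ`. -/
noncomputable def Pperp (M : ℕ) (μ φ : ℝ) : Matrix (Fin M ⊕ Fin M) (Fin M ⊕ Fin M) ℂ :=
  1 - ((1 : ℂ) / (2 * (M : ℂ))) • (ancvec M μ φ * (ancvec M μ φ)ᴴ)

/-- The row vector
`vᵀ = (√(2M)/(2(M−1))) (a^{nc})ᴴ (J₁^{nc})ᵀ (e^{−iμ} J₂^{nc} − J₁^{nc}) P⊥ ∈ ℂ^{1×2M}`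
from the single-source ESPRIT error computation. -/
noncomputable def vT (M : ℕ) (μ φ : ℝ) : Matrix (Fin 1) (Fin M ⊕ Fin M) ℂ :=
  (((Real.sqrt (2 * M) : ℝ) : ℂ) / (2 * ((M : ℂ) - 1))) •
    ((ancvec M μ φ)ᴴ * (J1nc M)ᵀ *
      (Complex.exp (-(Complex.I * (μ : ℂ))) • J2nc M - J1nc M) * Pperp M μ φ)

/-- The `2M × 2M` exchange matrix `Π_{2M}`, represented on the index type
`Fin M ⊕ Fin M` as the block matrix `[[0, Π_M],[Π_M, 0]]`. -/
def Pi2M (M : ℕ) : Matrix (Fin M ⊕ Fin M) (Fin M ⊕ Fin M) ℂ :=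
  Matrix.fromBlocks 0 (exchg ℂ M) (exchg ℂ M) 0

/-- The normalized conjugated symbol vector
`s̃ = conj(e^{iφ} s₀)/(√(2 M N P) √(N P)) ∈ ℂ^N`. -/
noncomputable def stilde (M N : ℕ) (φ : ℝ) (P : ℝ) (s0 : Fin N → ℝ) : Fin N → ℂ :=
  fun t => (starRingEnd ℂ) (Complex.exp (Complex.I * (φ : ℂ)) * ((s0 t : ℝ) : ℂ)) /
    (((Real.sqrt (2 * M * N * P) * Real.sqrt (N * P) : ℝ) : ℂ))

section General

variable {m n p R : Type*}

lemma submatrix_one_mul [Fintype n] [DecidableEq n] [NonAssocSemiring R] (f : m → n)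
    (A : Matrix n p R) : (1 : Matrix n n R).submatrix f id * A = A.submatrix f id :=
  one_submatrix_mul f (Equiv.refl n) A

lemma submatrix_one_transpose_mul_self [Fintype m] [DecidableEq n] [NonAssocSemiring R] {f : m → n}
    (hf : Function.Injective f) :
    ((1 : Matrix n n R).submatrix f id)ᵀ * (1 : Matrix n n R).submatrix f id =
      diagonal ((Set.range f).indicator 1) := by
  ext j k
  simp only [mul_apply, transpose_apply, submatrix_apply, id, one_apply, diagonal_apply]
  by_cases hj : j ∈ Set.range f
  · obtain ⟨i, rfl⟩ := hj
    rw [Fintype.sum_eq_single i fun i' hi => by rw [if_neg (hf.ne hi), zero_mul]]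
    simp
  · have hne (i) : f i ≠ j := fun h => hj ⟨i, h⟩
    simp [hne, hj]

lemma smul_sub_mul_eq_zero [Fintype n] [Ring R] {S T : Matrix m n R} {a : Matrix n p R} {w z : R}
    (h : T * a = z • (S * a)) (hwz : w * z = 1) : (w • T - S) * a = 0 := by
  rw [Matrix.sub_mul, Matrix.smul_mul, h, smul_smul, hwz, one_smul, sub_self]

lemma conjTranspose_mul_star_smul_sub_eq [Fintype m] [Fintype n] [CommRing R] [StarRing R]
    {S T : Matrix m n R} {a : Matrix n p R} {z : R} (h : T * a = z • (S * a)) :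
    aᴴ * Sᴴ * (star z • T - S) = aᴴ * (Tᴴ * T - Sᴴ * S) := by
  have hT : aᴴ * Tᴴ = star z • (aᴴ * Sᴴ) := by
    rw [← conjTranspose_mul, h, conjTranspose_smul, conjTranspose_mul]
  simp only [Matrix.mul_sub, ← Matrix.mul_assoc, hT, Matrix.smul_mul, Matrix.mul_smul]

lemma star_mul_self_of_norm_eq_one {𝕜 : Type*} [RCLike 𝕜] {z : 𝕜} (hz : ‖z‖ = 1) :
    star z * z = 1 := by
  rw [RCLike.star_def, RCLike.conj_mul, hz, RCLike.ofReal_one, one_pow]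

lemma star_exp_I_mul_ofReal (x : ℝ) : star (exp (I * x)) = exp (-(I * x)) := by
  simp [← exp_conj]

end General

section Exchange

variable {R κ : Type*} [NonAssocSemiring R]

lemma exchg_eq_submatrix_one (n : ℕ) :
    exchg R n = (1 : Matrix (Fin n) (Fin n) R).submatrix Fin.revPerm id := by
  ext i j
  simp only [exchg, of_apply, submatrix_apply, one_apply, Fin.revPerm_apply, Fin.ext_iff,
    Fin.val_rev, id]
  congr 1
  grind

lemma exchg_mul {n : ℕ} (A : Matrix (Fin n) κ R) : exchg R n * A = A.submatrix Fin.rev id := by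
  rw [exchg_eq_submatrix_one]
  exact submatrix_one_mul Fin.rev A

lemma mul_exchg {n : ℕ} (A : Matrix κ (Fin n) R) : A * exchg R n = A.submatrix id Fin.rev := by
  rw [exchg_eq_submatrix_one]
  exact mul_submatrix_one Fin.revPerm id A

end Exchange

/-- Index reversal of the augmented array, the permutation underlying `Π_{2M}`. -/
def ncRev (M : ℕ) : Equiv.Perm (Fin M ⊕ Fin M) :=
  (Equiv.sumComm _ _).trans (Equiv.sumCongr Fin.revPerm Fin.revPerm)

/-- The positions selected by `J₁`, i.e. all but the last one. -/
def leading (M : ℕ) (i : Fin (M - 1)) : Fin M := ⟨i, by omega⟩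

/-- The positions selected by `J₂`, i.e. all but the first one. -/
def trailing (M : ℕ) (i : Fin (M - 1)) : Fin M := ⟨i + 1, by omega⟩

/-- The sign pattern left on a uniform linear array by telescoping: `1` at the last sensor, `-1` at
the first one and `0` elsewhere. -/
def edgeSign (M : ℕ) (k : Fin M) : ℝ :=
  (if (k : ℕ) = M - 1 then 1 else 0) - (if (k : ℕ) = 0 then 1 else 0)

/-- The sign pattern `edgeSign` on both halves of the augmented array; it is the diagonal of
`(J₂^{nc})ᵀ J₂^{nc} − (J₁^{nc})ᵀ J₁^{nc}`. -/
def ncEdgeSign (M : ℕ) : Fin M ⊕ Fin M → ℝ :=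
  Sum.elim (edgeSign M) (edgeSign M)

section Array

variable (M : ℕ)

lemma mul_Pi2M {κ : Type*} (A : Matrix κ (Fin M ⊕ Fin M) ℂ) :
    A * Pi2M M = A.submatrix id (ncRev M) := by
  have h : Pi2M M = (1 : Matrix _ _ ℂ).submatrix (ncRev M) id := by
    ext (i | i) (j | j) <;> simp [Pi2M, ncRev, exchg_eq_submatrix_one, one_apply]
  rw [h, mul_submatrix_one]
  ext i (j | j) <;> rfl

lemma rev_leading (i : Fin (M - 1)) : (leading M i).rev = trailing M i.rev := by
  ext
  simp only [leading, trailing, Fin.val_rev]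
  omega

lemma rev_trailing (i : Fin (M - 1)) : (trailing M i).rev = leading M i.rev := by
  ext
  simp only [leading, trailing, Fin.val_rev]
  omega

lemma leading_injective : Function.Injective (leading M) := fun _ _ h =>
  Fin.ext (Fin.mk.inj h)

lemma trailing_injective : Function.Injective (trailing M) := fun _ _ h =>
  Fin.ext (Nat.succ.inj (Fin.mk.inj h))

lemma exists_leading_eq_iff {k : Fin M} : (∃ i, leading M i = k) ↔ (k : ℕ) ≠ M - 1 := by
  refine ⟨?_, fun h => ⟨⟨k, by omega⟩, rfl⟩⟩
  rintro ⟨i, rfl⟩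
  exact i.isLt.ne

lemma exists_trailing_eq_iff {k : Fin M} : (∃ i, trailing M i = k) ↔ (k : ℕ) ≠ 0 := by
  refine ⟨?_, fun h => ⟨⟨k - 1, by omega⟩, Fin.ext (Nat.succ_pred h)⟩⟩
  rintro ⟨i, rfl⟩
  exact Nat.succ_ne_zero i

lemma Jsel1_eq_submatrix_one : Jsel1 M = (1 : Matrix _ _ ℂ).submatrix (leading M) id := by
  ext i j
  simp [Jsel1, leading, one_apply, Fin.ext_iff, eq_comm]

lemma Jsel2_eq_submatrix_one : Jsel2 M = (1 : Matrix _ _ ℂ).submatrix (trailing M) id := by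
  ext i j
  simp [Jsel2, trailing, one_apply, Fin.ext_iff, eq_comm]

lemma exchg_mul_Jsel2_mul_exchg : exchg ℂ (M - 1) * Jsel2 M * exchg ℂ M = Jsel1 M := by
  rw [exchg_mul, mul_exchg, Jsel1_eq_submatrix_one, Jsel2_eq_submatrix_one]
  ext i j
  simp [one_apply, ← rev_leading]

lemma exchg_mul_Jsel1_mul_exchg : exchg ℂ (M - 1) * Jsel1 M * exchg ℂ M = Jsel2 M := by
  rw [exchg_mul, mul_exchg, Jsel1_eq_submatrix_one, Jsel2_eq_submatrix_one]
  ext i j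
  simp [one_apply, ← rev_trailing]

lemma J1nc_eq_submatrix_one :
    J1nc M = (1 : Matrix _ _ ℂ).submatrix (Sum.map (leading M) (leading M)) id := by
  rw [J1nc, exchg_mul_Jsel2_mul_exchg, Jsel1_eq_submatrix_one]
  ext (i | i) (j | j) <;> simp [one_apply]

lemma J2nc_eq_submatrix_one :
    J2nc M = (1 : Matrix _ _ ℂ).submatrix (Sum.map (trailing M) (trailing M)) id := by
  rw [J2nc, exchg_mul_Jsel1_mul_exchg, Jsel2_eq_submatrix_one]
  ext (i | i) (j | j) <;> simp [one_apply]

lemma J1nc_conjTranspose : (J1nc M)ᴴ = (J1nc M)ᵀ := by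
  rw [J1nc_eq_submatrix_one, conjTranspose_submatrix, transpose_submatrix, conjTranspose_one,
    transpose_one]

lemma J2nc_conjTranspose : (J2nc M)ᴴ = (J2nc M)ᵀ := by
  rw [J2nc_eq_submatrix_one, conjTranspose_submatrix, transpose_submatrix, conjTranspose_one,
    transpose_one]

lemma J2nc_gram_sub_J1nc_gram :
    (J2nc M)ᵀ * J2nc M - (J1nc M)ᵀ * J1nc M = diagonal fun j => (ncEdgeSign M j : ℂ) := by
  rw [J1nc_eq_submatrix_one, J2nc_eq_submatrix_one,
    submatrix_one_transpose_mul_self ((trailing_injective M).sumMap (trailing_injective M)),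
    submatrix_one_transpose_mul_self ((leading_injective M).sumMap (leading_injective M)),
    diagonal_sub]
  congr 1
  ext (k | k) <;>
  · simp only [Set.indicator_apply, Set.mem_range, Sum.exists, Sum.map_inl, Sum.map_inr,
      Sum.inl.injEq, Sum.inr.injEq, reduceCtorEq, exists_false, or_false, false_or,
      exists_leading_eq_iff, exists_trailing_eq_iff, ncEdgeSign, Sum.elim_inl, Sum.elim_inr,
      edgeSign]
    split_ifs <;> simp_all

lemma edgeSign_rev (k : Fin M) : edgeSign M k.rev = -edgeSign M k := by
  have hlast : (k.rev : ℕ) = M - 1 ↔ (k : ℕ) = 0 := by rw [Fin.val_rev]; omega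
  have hfirst : (k.rev : ℕ) = 0 ↔ (k : ℕ) = M - 1 := by rw [Fin.val_rev]; omega
  simp only [edgeSign, hlast, hfirst, neg_sub]

lemma ncEdgeSign_ncRev (j : Fin M ⊕ Fin M) : ncEdgeSign M (ncRev M j) = -ncEdgeSign M j := by
  rcases j with k | k <;> exact edgeSign_rev M k

variable {M} in
lemma sum_sq_edgeSign (hM : 2 ≤ M) : ∑ k, edgeSign M k ^ 2 = 2 := by
  have hterm (k : Fin M) :
      edgeSign M k ^ 2 =
        (if k = ⟨M - 1, by omega⟩ then 1 else 0) + if k = ⟨0, by omega⟩ then 1 else 0 := by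
    simp only [edgeSign, Fin.ext_iff]
    split_ifs <;> first | omega | norm_num
  simp only [hterm, Finset.sum_add_distrib, Finset.sum_ite_eq', Finset.mem_univ, if_true]
  norm_num

variable {M} in
lemma sum_sq_ncEdgeSign (hM : 2 ≤ M) : ∑ j, ncEdgeSign M j ^ 2 = 4 := by
  simp only [Fintype.sum_sum_type, ncEdgeSign, Sum.elim_inl, Sum.elim_inr, sum_sq_edgeSign hM]
  norm_num

variable (μ φ : ℝ)

lemma avec_trailing (i : Fin (M - 1)) :
    avec M μ (trailing M i) 0 = exp (I * μ) * avec M μ (leading M i) 0 := by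
  simp only [avec, trailing, leading, of_apply, ← exp_add, Nat.cast_add, Nat.cast_one]
  ring_nf

lemma ancvec_inl (k : Fin M) : ancvec M μ φ (.inl k) 0 = avec M μ k 0 := rfl

lemma ancvec_inr (k : Fin M) :
    ancvec M μ φ (.inr k) 0 = exp (-(2 * φ * I)) * star (avec M μ k.rev 0) := by
  simp [ancvec, exchg_mul]

lemma norm_ancvec (j : Fin M ⊕ Fin M) : ‖ancvec M μ φ j 0‖ = 1 := by
  rcases j with k | k <;> simp [ancvec_inl, ancvec_inr, avec, norm_exp]

lemma ancvec_ncRev (j : Fin M ⊕ Fin M) :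
    ancvec M μ φ (ncRev M j) 0 = exp (-(2 * φ * I)) * star (ancvec M μ φ j 0) := by
  rcases j with k | k
  · simp [ncRev, ancvec_inl, ancvec_inr]
  · have hphase : exp (-(2 * φ * I)) * star (exp (-(2 * φ * I))) = 1 := by
      rw [mul_comm]
      exact star_mul_self_of_norm_eq_one (by simp [norm_exp])
    rw [ancvec_inr, star_mul', star_star, ← mul_assoc, hphase, one_mul]
    rfl

lemma ancvec_trailing (i : Fin (M - 1) ⊕ Fin (M - 1)) :
    ancvec M μ φ (i.map (trailing M) (trailing M)) 0 =
      exp (I * μ) * ancvec M μ φ (i.map (leading M) (leading M)) 0 := by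
  rcases i with i | i
  · exact avec_trailing M μ i
  · have hphase : exp (I * μ) * star (exp (I * μ)) = 1 := by
      rw [mul_comm]
      exact star_mul_self_of_norm_eq_one (by simp [norm_exp])
    rw [Sum.map_inr, Sum.map_inr, ancvec_inr, ancvec_inr, rev_leading, rev_trailing, avec_trailing,
      star_mul', mul_left_comm, ← mul_assoc (exp (I * μ)), hphase, one_mul]

lemma J2nc_mul_ancvec : J2nc M * ancvec M μ φ = exp (I * μ) • (J1nc M * ancvec M μ φ) := by
  rw [J1nc_eq_submatrix_one, J2nc_eq_submatrix_one, submatrix_one_mul, submatrix_one_mul]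
  ext i j
  rw [Subsingleton.elim j 0]
  exact ancvec_trailing M μ φ i

variable {M μ φ} in
lemma mul_Pperp_of_mul_ancvec_eq_zero {κ : Type*} {A : Matrix κ (Fin M ⊕ Fin M) ℂ}
    (hA : A * ancvec M μ φ = 0) : A * Pperp M μ φ = A := by
  rw [Pperp, Matrix.mul_sub, Matrix.mul_smul, ← Matrix.mul_assoc, hA, Matrix.zero_mul, smul_zero,
    sub_zero, Matrix.mul_one]

lemma vT_eq :
    vT M μ φ = ((√(2 * M) / (2 * (M - 1)) : ℝ) : ℂ) •
      ((ancvec M μ φ)ᴴ * diagonal fun j => (ncEdgeSign M j : ℂ)) := by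
  have hshift := J2nc_mul_ancvec M μ φ
  have hproj : (star (exp (I * μ)) • J2nc M - J1nc M) * Pperp M μ φ =
      star (exp (I * μ)) • J2nc M - J1nc M :=
    mul_Pperp_of_mul_ancvec_eq_zero <| smul_sub_mul_eq_zero hshift <|
      star_mul_self_of_norm_eq_one (by simp [norm_exp])
  rw [vT, ← star_exp_I_mul_ofReal, Matrix.mul_assoc _ _ (Pperp M μ φ), hproj, ← J1nc_conjTranspose,
    conjTranspose_mul_star_smul_sub_eq hshift, J1nc_conjTranspose, J2nc_conjTranspose,
    J2nc_gram_sub_J1nc_gram]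
  push_cast
  rfl

lemma vT_apply (j : Fin M ⊕ Fin M) :
    vT M μ φ 0 j = (√(2 * M) / (2 * (M - 1)) : ℝ) * (star (ancvec M μ φ j 0) * ncEdgeSign M j) := by
  simp [vT_eq]

variable {M} in
lemma sum_normSq_vT (hM : 2 ≤ M) : ∑ j, normSq (vT M μ φ 0 j) = 2 * M / ((M : ℝ) - 1) ^ 2 := by
  have hterm (j) : normSq (vT M μ φ 0 j) = 2 * M / (2 * (M - 1)) ^ 2 * ncEdgeSign M j ^ 2 := by
    rw [vT_apply, normSq_eq_norm_sq, norm_mul, norm_mul, norm_star, norm_ancvec, one_mul, mul_pow,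
      norm_real, norm_real, Real.norm_eq_abs, Real.norm_eq_abs, sq_abs, sq_abs, div_pow,
      Real.sq_sqrt (by positivity)]
  simp only [hterm, ← Finset.mul_sum, sum_sq_ncEdgeSign hM]
  field_simp
  norm_num

lemma vT_ncRev (j : Fin M ⊕ Fin M) :
    vT M μ φ 0 (ncRev M j) = -exp (2 * φ * I) * star (vT M μ φ 0 j) := by
  have hphase : star (exp (-(2 * φ * I))) = exp (2 * φ * I) := by
    simp [← exp_conj, conj_ofNat]
  simp only [vT_apply, ancvec_ncRev, ncEdgeSign_ncRev, star_mul', hphase, RCLike.star_def,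
    conj_ofReal, ofReal_neg]
  ring

lemma vT_mul_Pi2M_mul_vT_transpose :
    (vT M μ φ * Pi2M M * (vT M μ φ)ᵀ) 0 0 =
      -exp (2 * φ * I) * ↑(∑ j, normSq (vT M μ φ 0 j)) := by
  rw [mul_Pi2M, mul_apply, ofReal_sum, Finset.mul_sum]
  refine Finset.sum_congr rfl fun j _ => ?_
  rw [submatrix_apply, transpose_apply, id, vT_ncRev, normSq_eq_conj_mul_self, mul_assoc]
  rfl

section Source

variable {N : ℕ} (P : ℝ) (s0 : Fin N → ℝ)

lemma stilde_apply (t : Fin N) :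
    stilde M N φ P s0 t =
      exp (-(φ * I)) * (s0 t / (√(2 * M * N * P) * √(N * P)) : ℝ) := by
  simp [stilde, ← exp_conj, mul_comm I, mul_div_assoc]

lemma normSq_stilde (t : Fin N) :
    normSq (stilde M N φ P s0 t) = (s0 t / (√(2 * M * N * P) * √(N * P))) ^ 2 := by
  rw [stilde_apply, normSq_eq_norm_sq, norm_mul, norm_real, mul_pow, Real.norm_eq_abs, sq_abs]
  simp [norm_exp]

variable {P} in
lemma sum_normSq_stilde (hP : 0 ≤ P) :
    ∑ t, normSq (stilde M N φ P s0 t) = (∑ t, s0 t ^ 2) / (2 * M * (N * P) ^ 2) := by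
  simp only [normSq_stilde, div_pow, mul_pow, ← Finset.sum_div]
  rw [Real.sq_sqrt (by positivity), Real.sq_sqrt (by positivity)]
  ring

lemma sum_sq_stilde :
    ∑ t, stilde M N φ P s0 t ^ 2 =
      exp (-(2 * φ * I)) * ↑(∑ t, normSq (stilde M N φ P s0 t)) := by
  have hphase : exp (-(2 * φ * I)) = exp (-(φ * I)) ^ 2 := by
    rw [← exp_nat_mul]
    push_cast
    ring_nf
  rw [ofReal_sum, Finset.mul_sum]
  refine Finset.sum_congr rfl fun t _ => ?_
  rw [normSq_stilde, stilde_apply, mul_pow, hphase, ofReal_pow]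

lemma re_sum_sq_stilde_mul_vT_mul_Pi2M_mul_vT_transpose :
    ((∑ t, stilde M N φ P s0 t ^ 2) * (vT M μ φ * Pi2M M * (vT M μ φ)ᵀ) 0 0).re =
      -((∑ t, normSq (stilde M N φ P s0 t)) * ∑ j, normSq (vT M μ φ 0 j)) := by
  have hphase : exp (-(2 * φ * I)) * exp (2 * φ * I) = 1 := by
    rw [← exp_add, neg_add_cancel, exp_zero]
  rw [sum_sq_stilde, vT_mul_Pi2M_mul_vT_transpose, ← ofReal_re (-_)]
  congr 1
  push_cast
  linear_combination (-(∑ t, (normSq (stilde M N φ P s0 t) : ℂ)) *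
    ∑ j, (normSq (vT M μ φ 0 j) : ℂ)) * hphase

end Source

end Array

/-- the mean squared error of 1-D NC Standard ESPRIT for a single
strictly non-circular source in circularly symmetric white noise of variance `σ²`,
`(σ²/2) (‖s̃‖² ‖v‖² − Re{(s̃ᵀ s̃)(vᵀ Π_{2M} v)})`, equals
`(σ²/(N P)) · 1/(M − 1)²`, i.e. the reciprocal effective SNR times `M/(M (M − 1)²)`. -/
theorem single_source_nc_esprit_mse
    (M N : ℕ) (hM : 2 ≤ M) (hN : 1 ≤ N) (μ φ σ : ℝ) (hσ : 0 < σ)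
    (s0 : Fin N → ℝ) (hs0 : s0 ≠ 0)
    (P : ℝ) (hP : P = (∑ t, (s0 t) ^ 2) / N) :
    (σ ^ 2 / 2) *
        ((∑ t, Complex.normSq (stilde M N φ P s0 t)) *
            (∑ j, Complex.normSq (vT M μ φ 0 j)) -
          ((∑ t, (stilde M N φ P s0 t) ^ 2) *
            ((vT M μ φ * Pi2M M * (vT M μ φ)ᵀ) 0 0)).re)
      = (σ ^ 2 / ((N : ℝ) * P)) * ((M : ℝ) / ((M : ℝ) * ((M : ℝ) - 1) ^ 2)) := by
  have hpow : 0 < ∑ t, s0 t ^ 2 := by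
    obtain ⟨t, ht⟩ := Function.ne_iff.mp hs0
    exact Finset.sum_pos' (fun t _ => sq_nonneg (s0 t)) ⟨t, Finset.mem_univ t, sq_pos_of_ne_zero ht⟩
  have hN0 : (0 : ℝ) < N := by exact_mod_cast hN
  have hP0 : 0 < P := hP ▸ div_pos hpow hN0
  have hNP : ∑ t, s0 t ^ 2 = N * P := by rw [hP, mul_div_cancel₀ _ hN0.ne']
  have hM1 : (0 : ℝ) < M - 1 := sub_pos.mpr (by exact_mod_cast hM)
  rw [re_sum_sq_stilde_mul_vT_mul_Pi2M_mul_vT_transpose, sum_normSq_stilde M φ s0 hP0.le, hNP,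
    sum_normSq_vT μ φ hM]
  field_simp
  ring
end
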